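/- arXiv:2403.13697 — 16 statements merged into one kernel-verified Lean document; each statement's English description precedes it below -/
import Mathlib

section
/- Let A be a (not necessarily associative) algebra over a field F which decomposes as a direct sum of vector subspaces A = A₁ ⊕ A₂, where A₁ and A₂ are subalgebras of A. Let μ ∈ Cent(A) be a centrum map such that μ(xy) ∈ A₁ for all x,y ∈ A₁ and μ(ab) ∈ A₂ for all a,b ∈ A₂. Then the linear map R : A → A defined by R(x + a) = −μ(x) for all x ∈ A₁ and a ∈ A₂ is a Rota–Baxter operator of weight μ. -/
/-- `μ` is a centrum map of the (not necessarily associative) algebra `(A, mul)`: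
`μ(xy) = μ(x)y = xμ(y)` for all `x, y`. -/
def IsCentrumMap {F A : Type*} [Field F] [AddCommGroup A] [Module F A]
    (mul : A →ₗ[F] A →ₗ[F] A) (μ : A →ₗ[F] A) : Prop :=
  ∀ x y : A, μ (mul x y) = mul (μ x) y ∧ μ (mul x y) = mul x (μ y)

/-- `R` is a Rota–Baxter operator of weight `μ` on `(A, mul)`. -/
def IsRotaBaxterOp {F A : Type*} [Field F] [AddCommGroup A] [Module F A]
    (mul : A →ₗ[F] A →ₗ[F] A) (μ R : A →ₗ[F] A) : Prop :=
  ∀ x y : A, mul (R x) (R y) = R (mul (R x) y + mul x (R y) + μ (mul x y))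

/-- if `A = A₁ ⊕ A₂` with `A₁, A₂` subalgebras, `μ` a centrum map with
`μ(A₁·A₁) ⊆ A₁` and `μ(A₂·A₂) ⊆ A₂`, then `R(x + a) = -μ(x)` (for `x ∈ A₁`, `a ∈ A₂`)
is a Rota–Baxter operator of weight `μ`. -/
theorem statement0 {F A : Type*} [Field F] [AddCommGroup A] [Module F A]
    (mul : A →ₗ[F] A →ₗ[F] A)
    (A₁ A₂ : Submodule F A) (hcompl : IsCompl A₁ A₂)
    (hA₁ : ∀ x ∈ A₁, ∀ y ∈ A₁, mul x y ∈ A₁)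
    (hA₂ : ∀ x ∈ A₂, ∀ y ∈ A₂, mul x y ∈ A₂)
    (μ : A →ₗ[F] A) (hμ : IsCentrumMap mul μ)
    (hμ₁ : ∀ x ∈ A₁, ∀ y ∈ A₁, μ (mul x y) ∈ A₁)
    (hμ₂ : ∀ x ∈ A₂, ∀ y ∈ A₂, μ (mul x y) ∈ A₂)
    (R : A →ₗ[F] A)
    (hR : ∀ x ∈ A₁, ∀ a ∈ A₂, R (x + a) = -μ x) :
    IsRotaBaxterOp mul μ R := by
  intro u v
  obtain ⟨x, hx, a, ha, rfl⟩ := Submodule.mem_sup.mp (hcompl.sup_eq_top ▸ Submodule.mem_top : u ∈ A₁ ⊔ A₂)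
  obtain ⟨y, hy, b, hb, rfl⟩ := Submodule.mem_sup.mp (hcompl.sup_eq_top ▸ Submodule.mem_top : v ∈ A₁ ⊔ A₂)
  have hsum : mul (R (x + a)) (y + b) + mul (x + a) (R (y + b)) + μ (mul (x + a) (y + b))
      = -μ (mul x y) + μ (mul a b) := by
    rw [hR x hx a ha, hR y hy b hb]
    simp only [map_neg, LinearMap.neg_apply, ← (hμ _ _).1, ← (hμ _ _).2, map_add,
      LinearMap.add_apply]
    abel
  rw [hsum, hR _ (neg_mem (hμ₁ x hx y hy)) _ (hμ₂ a ha b hb), hR x hx a ha, hR y hy b hb]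
  simp only [map_neg, LinearMap.neg_apply, neg_neg, ← (hμ _ _).1, ← (hμ _ _).2]
end

section
/- Let A be a (not necessarily associative) algebra over a field F, let R : A → A be a Rota–Baxter operator of weight μ ∈ Cent(A), and let γ ∈ Cent(A). Then μ∘γ is again a centrum map of A, and the composition R∘γ is a Rota–Baxter operator of weight μ∘γ. -/
namespace IsCentrumMap

variable {F A : Type*} [Field F] [AddCommGroup A] [Module F A]
  {mul : A →ₗ[F] A →ₗ[F] A} {μ γ : A →ₗ[F] A}

/-- The composition of two centrum maps is a centrum map. -/
theorem comp (hμ : IsCentrumMap mul μ) (hγ : IsCentrumMap mul γ) :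
    IsCentrumMap mul (μ ∘ₗ γ) := fun x y =>
  ⟨by rw [LinearMap.comp_apply, (hγ x y).1, (hμ _ y).1, LinearMap.comp_apply],
    by rw [LinearMap.comp_apply, (hγ x y).2, (hμ x _).2, LinearMap.comp_apply]⟩

/-- Centrum maps commute on products. -/
theorem apply_apply_mul_comm (hμ : IsCentrumMap mul μ) (hγ : IsCentrumMap mul γ) (x y : A) :
    γ (μ (mul x y)) = μ (γ (mul x y)) := by
  rw [(hμ x y).2, (hγ x _).1, ← (hμ _ y).2, ← (hγ x y).1]

end IsCentrumMap

/-- if `R` is a Rota–Baxter operator of weight `μ ∈ Cent(A)` and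
`γ ∈ Cent(A)`, then `μ∘γ` is a centrum map and `R∘γ` is a Rota–Baxter operator of
weight `μ∘γ`. -/
theorem statement1 {F A : Type*} [Field F] [AddCommGroup A] [Module F A]
    (mul : A →ₗ[F] A →ₗ[F] A) (μ γ R : A →ₗ[F] A)
    (hμ : IsCentrumMap mul μ) (hγ : IsCentrumMap mul γ)
    (hR : IsRotaBaxterOp mul μ R) :
    IsCentrumMap mul (μ ∘ₗ γ) ∧ IsRotaBaxterOp mul (μ ∘ₗ γ) (R ∘ₗ γ) := by
  refine ⟨hμ.comp hγ, fun x y => ?_⟩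
  have hweight : γ (μ (γ (mul x y))) = μ (mul (γ x) (γ y)) := by
    rw [(hγ x y).1, hμ.apply_apply_mul_comm hγ, (hγ (γ x) y).2]
  simp only [LinearMap.comp_apply]
  rw [hR (γ x) (γ y), map_add γ, map_add γ, (hγ _ y).2, (hγ x _).1, hweight]
end

section
/- Let A be a (not necessarily associative) algebra over a field F of characteristic different from 2, let μ ∈ Cent(A), and let Q : A → A be a linear map satisfying Q(x)Q(y) − Q(Q(x)y + xQ(y)) = −μ(μ(xy)) for all x,y ∈ A. Then the linear map R = (1/2)(Q − μ) is a Rota–Baxter operator of weight μ. -/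
/-- over a field of characteristic ≠ 2, if `Q` satisfies
`Q(x)Q(y) − Q(Q(x)y + xQ(y)) = −μ²(xy)` for a centrum map `μ`, then
`R = ½(Q − μ)` is a Rota–Baxter operator of weight `μ`. -/
theorem statement4 {F A : Type*} [Field F] [AddCommGroup A] [Module F A]
    (h2 : (2 : F) ≠ 0)
    (mul : A →ₗ[F] A →ₗ[F] A) (μ Q : A →ₗ[F] A)
    (hμ : IsCentrumMap mul μ)
    (hQ : ∀ x y : A,
      mul (Q x) (Q y) - Q (mul (Q x) y + mul x (Q y)) = -μ (μ (mul x y))) :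
    IsRotaBaxterOp mul μ ((2 : F)⁻¹ • (Q - μ)) := by
  intro x y
  have hleft : mul (μ x) (Q y) = μ (mul x (Q y)) := (hμ x (Q y)).1.symm
  have hright : mul (Q x) (μ y) = μ (mul (Q x) y) := (hμ (Q x) y).2.symm
  have hboth : mul (μ x) (μ y) = μ (μ (mul x y)) := by
    rw [(hμ x y).2, (hμ x (μ y)).1]
  have hprod : mul (Q x) (Q y) = Q (mul (Q x) y + mul x (Q y)) - μ (μ (mul x y)) := by
    rw [sub_eq_add_neg, ← hQ x y, add_sub_cancel]
  have harg : mul (((2 : F)⁻¹ • (Q - μ)) x) y + mul x (((2 : F)⁻¹ • (Q - μ)) y) + μ (mul x y)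
      = (2 : F)⁻¹ • (mul (Q x) y + mul x (Q y)) := by
    simp only [LinearMap.smul_apply, LinearMap.sub_apply, map_smul, map_sub,
      ← (hμ x y).1, ← (hμ x y).2]
    match_scalars <;> field_simp <;> ring
  rw [harg]
  simp only [LinearMap.smul_apply, LinearMap.sub_apply, map_smul, map_sub, hleft, hright,
    hboth, hprod, map_add]
  module
end

section
/- Let g be a Lie algebra over a field F of characteristic different from 2 and let R : g → g be a Rota–Baxter operator of weight μ ∈ Cent(g). Then the new product x ∘ y = [R(x),y] + [x,R(y)] + μ([x,y]) defines a Lie algebra structure on the underlying vector space of g, i.e. ∘ is bilinear, alternating (x ∘ x = 0), and satisfies the Jacobi identity. (This is the Lie-algebra instance of the paper's Corollary 2, which asserts that (A, ·_R) lies in the variety generated by A.) -/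
/-- The Jacobi identity for left-nested brackets. -/
theorem lie_jacobi_left {L : Type*} [LieRing L] (x y z : L) :
    ⁅⁅x, y⁆, z⁆ + ⁅⁅y, z⁆, x⁆ + ⁅⁅z, x⁆, y⁆ = 0 := by
  rw [← lie_skew ⁅x, y⁆ z, ← lie_skew ⁅y, z⁆ x, ← lie_skew ⁅z, x⁆ y, ← neg_add, ← neg_add,
    neg_eq_zero, ← lie_jacobi z x y]

/-- if `R` is a Rota–Baxter operator of weight `μ ∈ Cent(g)` on a Lie
algebra `g` over a field of characteristic ≠ 2, then
`x ∘ y = [R x, y] + [x, R y] + μ [x,y]` is a Lie algebra product on `g`: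
it is bilinear, alternating and satisfies the Jacobi identity. -/
theorem statement5 {F L : Type*} [Field F] [LieRing L] [LieAlgebra F L]
    (h2 : (2 : F) ≠ 0)
    (μ R : L →ₗ[F] L)
    (hμ : ∀ x y : L, μ ⁅x, y⁆ = ⁅μ x, y⁆ ∧ μ ⁅x, y⁆ = ⁅x, μ y⁆)
    (hR : ∀ x y : L, ⁅R x, R y⁆ = R (⁅R x, y⁆ + ⁅x, R y⁆ + μ ⁅x, y⁆)) :
    let b : L → L → L := fun x y => ⁅R x, y⁆ + ⁅x, R y⁆ + μ ⁅x, y⁆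
    (∀ x x' y : L, b (x + x') y = b x y + b x' y) ∧
    (∀ (c : F) (x y : L), b (c • x) y = c • b x y) ∧
    (∀ x y y' : L, b x (y + y') = b x y + b x y') ∧
    (∀ (c : F) (x y : L), b x (c • y) = c • b x y) ∧
    (∀ x : L, b x x = 0) ∧
    (∀ x y z : L, b (b x y) z + b (b y z) x + b (b z x) y = 0) := by
  intro b
  refine ⟨fun x x' y => ?_, fun c x y => ?_, fun x y y' => ?_, fun c x y => ?_, fun x => ?_,
    fun x y z => ?_⟩
  · simp only [b, map_add, add_lie]
    abel
  · simp only [b, map_smul, smul_lie, smul_add]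
  · simp only [b, map_add, lie_add]
    abel
  · simp only [b, map_smul, lie_smul, smul_add]
  · simp only [b, lie_self, map_zero, add_zero]
    rw [← lie_skew, neg_add_cancel]
  · have expand : ∀ u v w : L, b (b u v) w =
        ⁅⁅R u, R v⁆, w⁆ + ⁅⁅R u, v⁆, R w⁆ + ⁅⁅u, R v⁆, R w⁆
          + μ (⁅⁅u, v⁆, R w⁆ + ⁅⁅R u, v⁆, w⁆ + ⁅⁅u, R v⁆, w⁆) + μ (μ ⁅⁅u, v⁆, w⁆) := by
      intro u v w
      simp only [b]
      rw [← hR]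
      simp only [add_lie, map_add, ← (hμ _ _).1]
      abel
    calc b (b x y) z + b (b y z) x + b (b z x) y
        = (⁅⁅R x, R y⁆, z⁆ + ⁅⁅R y, z⁆, R x⁆ + ⁅⁅z, R x⁆, R y⁆)
          + (⁅⁅R x, y⁆, R z⁆ + ⁅⁅y, R z⁆, R x⁆ + ⁅⁅R z, R x⁆, y⁆)
          + (⁅⁅x, R y⁆, R z⁆ + ⁅⁅R y, R z⁆, x⁆ + ⁅⁅R z, x⁆, R y⁆)
          + μ ((⁅⁅x, y⁆, R z⁆ + ⁅⁅y, R z⁆, x⁆ + ⁅⁅R z, x⁆, y⁆)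
            + (⁅⁅R x, y⁆, z⁆ + ⁅⁅y, z⁆, R x⁆ + ⁅⁅z, R x⁆, y⁆)
            + (⁅⁅x, R y⁆, z⁆ + ⁅⁅R y, z⁆, x⁆ + ⁅⁅z, x⁆, R y⁆))
          + μ (μ (⁅⁅x, y⁆, z⁆ + ⁅⁅y, z⁆, x⁆ + ⁅⁅z, x⁆, y⁆)) := by
          rw [expand, expand, expand]
          simp only [map_add]
          abel
      _ = 0 := by simp only [lie_jacobi_left, map_zero, add_zero]
end

section
/- Let A be a (not necessarily associative) algebra over a field F, let μ ∈ Cent(A), and let R : A → A be a linear map. Then the subspace I(A) = {(μ(x)+R(x), x) : x ∈ A} is a two-sided ideal of the double D_{R,μ}(A) if and only if R is a Rota–Baxter operator of weight μ. -/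
/-- The product of the double `D_{R,μ}(A) = A × A`:
`(a,b̄)*(x,ȳ) = ax + R(ay) − aR(y) + R(bx) − R(b)x
             + (ay + bx − R(b)y − bR(y) − μ(by))‾`. -/
def doubleMul {F A : Type*} [Field F] [AddCommGroup A] [Module F A]
    (mul : A →ₗ[F] A →ₗ[F] A) (R μ : A →ₗ[F] A) (p q : A × A) : A × A :=
  (mul p.1 q.1 + R (mul p.1 q.2) - mul p.1 (R q.2) + R (mul p.2 q.1) - mul (R p.2) q.1,
   mul p.1 q.2 + mul p.2 q.1 - mul (R p.2) q.2 - mul p.2 (R q.2) - μ (mul p.2 q.2))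

/-- A pair lies in `{(f x, x) : x ∈ A}` iff its first coordinate is the value of `f` at its
second coordinate. -/
theorem mem_range_prod_id_iff {F A : Type*} [Field F] [AddCommGroup A] [Module F A]
    (f : A →ₗ[F] A) (p : A × A) :
    p ∈ LinearMap.range (f.prod (LinearMap.id : A →ₗ[F] A)) ↔ p.1 = f p.2 := by
  constructor
  · rintro ⟨x, rfl⟩
    rfl
  · intro h
    exact ⟨p.2, Prod.ext h.symm rfl⟩

/-- Multiplying `i(x)` on the left by `(a, b)` lands in `I(A)` iff the Rota–Baxter identity
holds at `(b, x)`. -/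
theorem doubleMul_right_mem_iff {F A : Type*} [Field F] [AddCommGroup A] [Module F A]
    (mul : A →ₗ[F] A →ₗ[F] A) (μ : A →ₗ[F] A) (hμ : IsCentrumMap mul μ)
    (R : A →ₗ[F] A) (a b x : A) :
    doubleMul mul R μ (a, b) (μ x + R x, x) ∈
        LinearMap.range ((μ + R).prod (LinearMap.id : A →ₗ[F] A)) ↔
      mul (R b) (R x) = R (mul (R b) x + mul b (R x) + μ (mul b x)) := by
  rw [mem_range_prod_id_iff]
  simp only [doubleMul, map_add, map_sub, LinearMap.add_apply, ← (hμ _ _).2]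
  rw [← sub_eq_zero, eq_comm (a := mul (R b) (R x)), ← sub_eq_zero (b := mul (R b) (R x))]
  refine Eq.congr ?_ rfl
  abel

/-- Multiplying `i(x)` on the right by `(a, b)` lands in `I(A)` iff the Rota–Baxter identity
holds at `(x, b)`. -/
theorem doubleMul_left_mem_iff {F A : Type*} [Field F] [AddCommGroup A] [Module F A]
    (mul : A →ₗ[F] A →ₗ[F] A) (μ : A →ₗ[F] A) (hμ : IsCentrumMap mul μ)
    (R : A →ₗ[F] A) (a b x : A) :
    doubleMul mul R μ (μ x + R x, x) (a, b) ∈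
        LinearMap.range ((μ + R).prod (LinearMap.id : A →ₗ[F] A)) ↔
      mul (R x) (R b) = R (mul (R x) b + mul x (R b) + μ (mul x b)) := by
  rw [mem_range_prod_id_iff]
  simp only [doubleMul, map_add, map_sub, LinearMap.add_apply, ← (hμ _ _).1]
  rw [← sub_eq_zero, eq_comm (a := mul (R x) (R b)), ← sub_eq_zero (b := mul (R x) (R b))]
  refine Eq.congr ?_ rfl
  abel

/-- the subspace `I(A) = {(μ(x)+R(x), x) : x ∈ A}` is a two-sided ideal
of the double `D_{R,μ}(A)` if and only if `R` is a Rota–Baxter operator of weight `μ`. -/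
theorem statement6 {F A : Type*} [Field F] [AddCommGroup A] [Module F A]
    (mul : A →ₗ[F] A →ₗ[F] A) (μ : A →ₗ[F] A) (hμ : IsCentrumMap mul μ)
    (R : A →ₗ[F] A) :
    (∀ p : A × A, ∀ q ∈ LinearMap.range ((μ + R).prod (LinearMap.id : A →ₗ[F] A)),
        doubleMul mul R μ p q ∈
            LinearMap.range ((μ + R).prod (LinearMap.id : A →ₗ[F] A)) ∧
        doubleMul mul R μ q p ∈
            LinearMap.range ((μ + R).prod (LinearMap.id : A →ₗ[F] A))) ↔
    IsRotaBaxterOp mul μ R := by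
  constructor
  · intro h b x
    exact (doubleMul_right_mem_iff mul μ hμ R 0 b x).1 (h (0, b) (μ x + R x, x) ⟨x, rfl⟩).1
  · rintro hR ⟨a, b⟩ _ ⟨x, rfl⟩
    exact ⟨(doubleMul_right_mem_iff mul μ hμ R a b x).2 (hR b x),
      (doubleMul_left_mem_iff mul μ hμ R a b x).2 (hR x b)⟩
end

section
/- Let A be a (not necessarily associative) algebra over a field F and let R : A → A be a Rota–Baxter operator of weight μ ∈ Cent(A). Then I(A)*I(A) = 0 in the double D_{R,μ}(A) (i.e. i(x)*i(y) = 0 for all x,y ∈ A) if and only if μ(xy) = 0 for all x,y ∈ A; and in that case R is a Rota–Baxter operator of weight 0, i.e. R(x)R(y) = R(R(x)y + xR(y)) for all x,y ∈ A. -/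
/-- The map `i(x) = (μ(x) + R(x), x)` satisfies `i(x) * i(y) = i(μ(xy))` in the double. -/
theorem doubleMul_graph {F A : Type*} [Field F] [AddCommGroup A] [Module F A]
    {mul : A →ₗ[F] A →ₗ[F] A} {μ R : A →ₗ[F] A}
    (hμ : IsCentrumMap mul μ) (hR : IsRotaBaxterOp mul μ R) (x y : A) :
    doubleMul mul R μ (μ x + R x, x) (μ y + R y, y) =
      (μ (μ (mul x y)) + R (μ (mul x y)), μ (mul x y)) := by
  have hl : ∀ a b, mul (μ a) b = μ (mul a b) := fun a b => (hμ a b).1.symm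
  have hr : ∀ a b, mul a (μ b) = μ (mul a b) := fun a b => (hμ a b).2.symm
  have h := hR x y
  simp only [map_add] at h
  simp only [doubleMul, map_add, LinearMap.add_apply, hl, hr, h]
  ext <;> dsimp only <;> abel

/-- for a Rota–Baxter operator `R` of weight `μ`, one has
`i(x)*i(y) = 0` in `D_{R,μ}(A)` for all `x,y` iff `μ(xy) = 0` for all `x,y`; and in
that case `R` is a Rota–Baxter operator of weight `0`. Here `i(x) = (μ(x)+R(x), x)`. -/
theorem statement7 {F A : Type*} [Field F] [AddCommGroup A] [Module F A]
    (mul : A →ₗ[F] A →ₗ[F] A) (μ R : A →ₗ[F] A)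
    (hμ : IsCentrumMap mul μ) (hR : IsRotaBaxterOp mul μ R) :
    ((∀ x y : A, doubleMul mul R μ (μ x + R x, x) (μ y + R y, y) = 0) ↔
        (∀ x y : A, μ (mul x y) = 0)) ∧
    ((∀ x y : A, μ (mul x y) = 0) →
        ∀ x y : A, mul (R x) (R y) = R (mul (R x) y + mul x (R y))) := by
  refine ⟨⟨fun h x y => ?_, fun h x y => ?_⟩, fun h x y => ?_⟩
  · simpa [doubleMul_graph hμ hR] using congrArg Prod.snd (h x y)
  · simp [doubleMul_graph hμ hR, h]
  · simpa [h] using hR x y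
end

section
/- Let A be a (not necessarily associative) algebra over a field F and let R : A → A be a Rota–Baxter operator of weight μ ∈ Cent(A), where μ is an invertible linear map. Then the double D_{R,μ}(A) decomposes as a direct sum of two ideals, D_{R,μ}(A) = I(A) ⊕ J(A) with J(A) = {(μ(x),0) − i(x) : x ∈ A}, satisfying I(A)*J(A) = J(A)*I(A) = 0, and both I(A) and J(A) are isomorphic to A as algebras; in particular D_{R,μ}(A) is isomorphic as an algebra to the direct product A × A with componentwise multiplication. -/
section DoubleMul

variable {F A : Type*} [Field F] [AddCommGroup A] [Module F A]
  {mul : A →ₗ[F] A →ₗ[F] A} {μ R : A →ₗ[F] A}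

/-- The map `i(x) = (μ(x) + R(x), x)`. -/
abbrev doubleI (μ R : A →ₗ[F] A) : A →ₗ[F] A × A :=
  (μ + R).prod (LinearMap.id : A →ₗ[F] A)

/-- The map `j(x) = (μ(x), 0) - i(x)`. -/
abbrev doubleJ (μ R : A →ₗ[F] A) : A →ₗ[F] A × A :=
  μ.prod (0 : A →ₗ[F] A) - (μ + R).prod (LinearMap.id : A →ₗ[F] A)

lemma doubleI_apply (x : A) : doubleI μ R x = (μ x + R x, x) := rfl

lemma doubleJ_apply (x : A) : doubleJ μ R x = (-R x, -x) := by
  simp [doubleJ]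

lemma doubleI_injective : Function.Injective (doubleI μ R) := fun _ _ h =>
  congrArg Prod.snd h

lemma doubleJ_injective : Function.Injective (doubleJ μ R) := fun x y h => by
  simpa [doubleJ_apply] using congrArg Prod.snd h

/-- The projection `(a, b) ↦ a - R(b)` of the double, which kills `J(A)`. -/
def doubleFst (R : A →ₗ[F] A) : A × A →ₗ[F] A :=
  LinearMap.fst F A A - R ∘ₗ LinearMap.snd F A A

/-- The projection `(a, b) ↦ a - R(b) - μ(b)` of the double, which kills `I(A)`. -/
def doubleSnd (μ R : A →ₗ[F] A) : A × A →ₗ[F] A :=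
  doubleFst R - μ ∘ₗ LinearMap.snd F A A

lemma doubleFst_apply (p : A × A) : doubleFst R p = p.1 - R p.2 := rfl

lemma doubleSnd_apply (p : A × A) : doubleSnd μ R p = p.1 - R p.2 - μ p.2 := rfl

lemma doubleFst_doubleI (x : A) : doubleFst R (doubleI μ R x) = μ x := by
  simp [doubleFst_apply]

lemma doubleFst_doubleJ (x : A) : doubleFst R (doubleJ μ R x) = 0 := by
  simp [doubleFst_apply]

lemma doubleSnd_doubleI (x : A) : doubleSnd μ R (doubleI μ R x) = 0 := by
  simp [doubleSnd_apply]

lemma doubleSnd_doubleJ (x : A) : doubleSnd μ R (doubleJ μ R x) = μ x := by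
  simp [doubleSnd_apply]

lemma doubleMul_doubleI (hμ : IsCentrumMap mul μ) (hR : IsRotaBaxterOp mul μ R)
    (p : A × A) (x : A) :
    doubleMul mul R μ p (doubleI μ R x) = doubleI μ R (mul (doubleFst R p) x) := by
  have h := hR p.2 x
  simp only [map_add] at h
  rw [doubleI_apply x, doubleI_apply (mul (doubleFst R p) x)]
  ext
  · simp only [doubleMul, doubleFst_apply, map_add, map_sub,
      LinearMap.sub_apply, ← (hμ _ _).2, h]
    abel
  · simp only [doubleMul, doubleFst_apply, map_add, map_sub,
      LinearMap.sub_apply, ← (hμ _ _).2]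
    abel

lemma doubleI_doubleMul (hμ : IsCentrumMap mul μ) (hR : IsRotaBaxterOp mul μ R)
    (p : A × A) (x : A) :
    doubleMul mul R μ (doubleI μ R x) p = doubleI μ R (mul x (doubleFst R p)) := by
  have h := hR x p.2
  simp only [map_add] at h
  rw [doubleI_apply x, doubleI_apply (mul x (doubleFst R p))]
  ext
  · simp only [doubleMul, doubleFst_apply, map_add, map_sub,
      LinearMap.add_apply, ← (hμ _ _).1, h]
    abel
  · simp only [doubleMul, doubleFst_apply, map_add, map_sub,
      LinearMap.add_apply, ← (hμ _ _).1]
    abel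

lemma doubleMul_doubleJ (hμ : IsCentrumMap mul μ) (hR : IsRotaBaxterOp mul μ R)
    (p : A × A) (x : A) :
    doubleMul mul R μ p (doubleJ μ R x) = doubleJ μ R (mul (doubleSnd μ R p) x) := by
  have h := hR p.2 x
  simp only [map_add] at h
  rw [doubleJ_apply x, doubleJ_apply (mul (doubleSnd μ R p) x)]
  ext
  · simp only [doubleMul, doubleSnd_apply, map_neg, map_sub,
      LinearMap.sub_apply, ← (hμ _ _).1, h]
    abel
  · simp only [doubleMul, doubleSnd_apply, map_neg, map_sub,
      LinearMap.sub_apply, ← (hμ _ _).1]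
    abel

lemma doubleJ_doubleMul (hμ : IsCentrumMap mul μ) (hR : IsRotaBaxterOp mul μ R)
    (p : A × A) (x : A) :
    doubleMul mul R μ (doubleJ μ R x) p = doubleJ μ R (mul x (doubleSnd μ R p)) := by
  have h := hR x p.2
  simp only [map_add] at h
  rw [doubleJ_apply x, doubleJ_apply (mul x (doubleSnd μ R p))]
  ext
  · simp only [doubleMul, doubleSnd_apply, map_neg, map_sub,
      LinearMap.neg_apply, ← (hμ _ _).2, h]
    abel
  · simp only [doubleMul, doubleSnd_apply, map_neg, map_sub,
      LinearMap.neg_apply, ← (hμ _ _).2]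
    abel

lemma doubleFst_doubleMul (hR : IsRotaBaxterOp mul μ R) (p q : A × A) :
    doubleFst R (doubleMul mul R μ p q) = mul (doubleFst R p) (doubleFst R q) := by
  have h := hR p.2 q.2
  simp only [map_add] at h
  simp only [doubleMul, doubleFst_apply, map_add, map_sub, LinearMap.sub_apply, h]
  abel

lemma doubleSnd_doubleMul (hμ : IsCentrumMap mul μ) (hR : IsRotaBaxterOp mul μ R)
    (p q : A × A) :
    doubleSnd μ R (doubleMul mul R μ p q) = mul (doubleSnd μ R p) (doubleSnd μ R q) := by
  have h := hR p.2 q.2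
  simp only [map_add] at h
  simp only [doubleMul, doubleSnd_apply, map_add, map_sub, LinearMap.sub_apply, h,
    ← (hμ _ _).1, ← (hμ _ _).2]
  abel

lemma doubleProj_bijective (hbij : Function.Bijective μ) :
    Function.Bijective ((doubleFst R).prod (doubleSnd μ R)) := by
  constructor
  · rw [← LinearMap.ker_eq_bot, LinearMap.ker_eq_bot']
    rintro ⟨a, b⟩ h
    obtain ⟨h₁, h₂⟩ := Prod.ext_iff.1 h
    have h₁ : a - R b = 0 := h₁
    have h₂ : a - R b - μ b = 0 := h₂
    obtain rfl : b = 0 := hbij.1 (by simpa [h₁] using h₂)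
    simpa using h₁
  · rintro ⟨c, d⟩
    obtain ⟨u, rfl⟩ := hbij.2 c
    obtain ⟨v, rfl⟩ := hbij.2 d
    refine ⟨doubleI μ R u + doubleJ μ R v, ?_⟩
    rw [map_add]
    refine Prod.ext ((congrArg₂ _ (doubleFst_doubleI u) (doubleFst_doubleJ v)).trans ?_)
      ((congrArg₂ _ (doubleSnd_doubleI u) (doubleSnd_doubleJ v)).trans ?_)
    · exact add_zero _
    · exact zero_add _

lemma isCompl_range_doubleI_doubleJ (hbij : Function.Bijective μ) :
    IsCompl (LinearMap.range (doubleI μ R)) (LinearMap.range (doubleJ μ R)) := by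
  refine ⟨Submodule.disjoint_def.2 ?_, codisjoint_iff_le_sup.2 fun p _ => ?_⟩
  · rintro _ ⟨x, rfl⟩ ⟨y, hy⟩
    have h : μ x = 0 := by
      rw [← doubleFst_doubleI (R := R), ← hy, doubleFst_doubleJ]
    rw [(map_eq_zero_iff μ hbij.1).1 h, map_zero]
  · obtain ⟨u, hu⟩ := hbij.2 (doubleFst R p)
    obtain ⟨v, hv⟩ := hbij.2 (doubleSnd μ R p)
    refine Submodule.mem_sup.2 ⟨_, ⟨u, rfl⟩, _, ⟨v, rfl⟩, (doubleProj_bijective (R := R) hbij).1 ?_⟩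
    rw [map_add]
    refine Prod.ext ((congrArg₂ _ (doubleFst_doubleI u) (doubleFst_doubleJ v)).trans ?_)
      ((congrArg₂ _ (doubleSnd_doubleI u) (doubleSnd_doubleJ v)).trans ?_)
    · exact (add_zero _).trans hu
    · exact (zero_add _).trans hv

/-- A linear embedding `f` of `A` that is multiplicative up to the invertible centrum map `μ`
becomes an isomorphism onto its range after composition with `μ⁻¹`. -/
lemma exists_equiv_range_of_mul_eq (hμ : IsCentrumMap mul μ) (hbij : Function.Bijective μ)
    {B : Type*} [AddCommGroup B] [Module F B] (dmul : B → B → B) (f : A →ₗ[F] B)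
    (hf : Function.Injective f) (hmul : ∀ x y, dmul (f x) (f y) = f (mul (μ x) y)) :
    ∃ e : A ≃ₗ[F] LinearMap.range f, ∀ x y : A, (e (mul x y) : B) = dmul (e x) (e y) := by
  let m := LinearEquiv.ofBijective μ hbij
  refine ⟨m.symm.trans (LinearEquiv.ofInjective f hf), fun x y => ?_⟩
  obtain ⟨u, rfl⟩ := m.surjective x
  obtain ⟨v, rfl⟩ := m.surjective y
  have h : mul (m u) (m v) = m (mul (m u) v) := ((hμ (μ u) v).2).symm
  rw [h]
  simp only [LinearEquiv.trans_apply, LinearEquiv.symm_apply_apply, LinearEquiv.ofInjective_apply]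
  exact (hmul u v).symm

end DoubleMul

/-- if `R` is a Rota–Baxter operator of invertible weight `μ`, then
`D_{R,μ}(A) = I(A) ⊕ J(A)`, where `I(A) = {i(x) = (μ(x)+R(x), x)}` and
`J(A) = {(μ(x),0) - i(x)}` are ideals with `I(A)*J(A) = J(A)*I(A) = 0`, each
isomorphic to `A` as an algebra; in particular `D_{R,μ}(A)` is isomorphic as an
algebra to the direct product `A × A` with componentwise multiplication. -/
theorem statement8 {F A : Type*} [Field F] [AddCommGroup A] [Module F A]
    (mul : A →ₗ[F] A →ₗ[F] A) (μ R : A →ₗ[F] A)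
    (hμ : IsCentrumMap mul μ) (hR : IsRotaBaxterOp mul μ R)
    (hbij : Function.Bijective μ) :
    let dmul := doubleMul mul R μ
    let I : Submodule F (A × A) :=
      LinearMap.range ((μ + R).prod (LinearMap.id : A →ₗ[F] A))
    let J : Submodule F (A × A) :=
      LinearMap.range (μ.prod (0 : A →ₗ[F] A) - (μ + R).prod (LinearMap.id : A →ₗ[F] A))
    (∀ p : A × A, ∀ q ∈ I, dmul p q ∈ I ∧ dmul q p ∈ I) ∧
    (∀ p : A × A, ∀ q ∈ J, dmul p q ∈ J ∧ dmul q p ∈ J) ∧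
    IsCompl I J ∧
    (∀ p ∈ I, ∀ q ∈ J, dmul p q = 0 ∧ dmul q p = 0) ∧
    (∃ eI : A ≃ₗ[F] I, ∀ x y : A,
        ((eI (mul x y) : A × A)) = dmul (eI x : A × A) (eI y : A × A)) ∧
    (∃ eJ : A ≃ₗ[F] J, ∀ x y : A,
        ((eJ (mul x y) : A × A)) = dmul (eJ x : A × A) (eJ y : A × A)) ∧
    (∃ e : (A × A) ≃ₗ[F] A × A, ∀ p q : A × A,
        e (dmul p q) = (mul (e p).1 (e q).1, mul (e p).2 (e q).2)) := by
  intro dmul I J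
  refine ⟨?_, ?_, isCompl_range_doubleI_doubleJ hbij, ?_, ?_, ?_, ?_⟩
  · rintro p _ ⟨x, rfl⟩
    exact ⟨⟨_, (doubleMul_doubleI hμ hR p x).symm⟩, ⟨_, (doubleI_doubleMul hμ hR p x).symm⟩⟩
  · rintro p _ ⟨x, rfl⟩
    exact ⟨⟨_, (doubleMul_doubleJ hμ hR p x).symm⟩, ⟨_, (doubleJ_doubleMul hμ hR p x).symm⟩⟩
  · rintro _ ⟨x, rfl⟩ _ ⟨y, rfl⟩
    constructor
    · refine (doubleMul_doubleJ hμ hR _ y).trans ?_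
      rw [doubleSnd_doubleI, map_zero, LinearMap.zero_apply, map_zero]
    · refine (doubleJ_doubleMul hμ hR _ y).trans ?_
      rw [doubleSnd_doubleI, map_zero, map_zero]
  · refine exists_equiv_range_of_mul_eq hμ hbij dmul _ doubleI_injective fun x y => ?_
    exact (doubleMul_doubleI hμ hR _ y).trans (by rw [doubleFst_doubleI])
  · refine exists_equiv_range_of_mul_eq hμ hbij dmul _ doubleJ_injective fun x y => ?_
    exact (doubleMul_doubleJ hμ hR _ y).trans (by rw [doubleSnd_doubleJ])
  · exact ⟨LinearEquiv.ofBijective _ (doubleProj_bijective (R := R) hbij), fun p q =>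
      Prod.ext (doubleFst_doubleMul hR p q) (doubleSnd_doubleMul hμ hR p q)⟩
end

section
/- Let A be a simple (not necessarily associative) algebra over a field F, i.e. A·A ≠ 0 and the only two-sided ideals of A are 0 and A. Let R : A → A and μ : A → A be arbitrary linear maps, and let I be a two-sided ideal of the double D_{R,μ}(A) with I ≠ 0 and I ≠ D_{R,μ}(A). Then I ∩ (A × {0}) = 0 and D_{R,μ}(A) = (A × {0}) ⊕ I as vector spaces; in particular I is isomorphic to A as a vector space. -/
/-- if `A` is a simple algebra (`A·A ≠ 0` and the only two-sided ideals
of `A` are `0` and `A`), `R, μ : A → A` are arbitrary linear maps and `I` is a proper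
nonzero two-sided ideal of `D_{R,μ}(A)`, then `I ∩ (A × 0) = 0`,
`D_{R,μ}(A) = (A × 0) ⊕ I` as vector spaces, and `I ≅ A` as vector spaces. -/
theorem statement9 {F A : Type*} [Field F] [AddCommGroup A] [Module F A]
    (mul : A →ₗ[F] A →ₗ[F] A)
    (hA2 : ∃ x y : A, mul x y ≠ 0)
    (hsimple : ∀ J : Submodule F A,
      (∀ a : A, ∀ b ∈ J, mul a b ∈ J ∧ mul b a ∈ J) → J = ⊥ ∨ J = ⊤)
    (R μ : A →ₗ[F] A)
    (I : Submodule F (A × A))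
    (hI : ∀ p : A × A, ∀ q ∈ I, doubleMul mul R μ p q ∈ I ∧ doubleMul mul R μ q p ∈ I)
    (hIbot : I ≠ ⊥) (hItop : I ≠ ⊤) :
    I ⊓ Submodule.fst F A A = ⊥ ∧
    IsCompl (Submodule.fst F A A) I ∧
    Nonempty (I ≃ₗ[F] A) := by
  have hdisj : ∀ q ∈ I, q.2 = 0 → q = 0 := by
    have hK := hsimple (I.comap (LinearMap.inl F A A)) fun a b hb => by
      simpa [doubleMul] using hI (a, 0) (b, 0) hb
    rcases hK with hK | hK
    · rintro ⟨a, b⟩ hq rfl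
      have ha : a ∈ I.comap (LinearMap.inl F A A) := hq
      rw [hK, Submodule.mem_bot] at ha
      rw [ha, Prod.mk_zero_zero]
    · exfalso
      have hfst : ∀ a : A, (a, (0 : A)) ∈ I := fun a => by
        have ha : a ∈ I.comap (LinearMap.inl F A A) := hK ▸ Submodule.mem_top
        exact ha
      have hprod : ∀ a y : A, ((0 : A), mul a y) ∈ I := fun a y => by
        have h := I.sub_mem (hI (0, y) (a, 0) (hfst a)).2 (hfst (R (mul a y) - mul a (R y)))
        simpa [doubleMul] using h
      rcases hsimple (I.comap (LinearMap.inr F A A)) fun a b _ => ⟨hprod a b, hprod b a⟩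
        with hJ | hJ
      · obtain ⟨x, y, hxy⟩ := hA2
        have h : mul x y ∈ I.comap (LinearMap.inr F A A) := hprod x y
        rw [hJ, Submodule.mem_bot] at h
        exact hxy h
      · refine hItop (eq_top_iff.2 fun ⟨a, b⟩ _ => ?_)
        have hb : b ∈ I.comap (LinearMap.inr F A A) := hJ ▸ Submodule.mem_top
        have h := I.add_mem (hfst a) hb
        simpa using h
  have hsurj : ∀ b : A, ∃ a : A, (a, b) ∈ I := by
    have hP := hsimple (I.map (LinearMap.snd F A A)) fun a b hb => by
      obtain ⟨q, hq, rfl⟩ := hb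
      have h := hI (a, 0) q hq
      exact ⟨⟨_, h.1, by simp [doubleMul]⟩, ⟨_, h.2, by simp [doubleMul]⟩⟩
    rcases hP with hP | hP
    · refine absurd ((Submodule.eq_bot_iff I).2 fun q hq => hdisj q hq ?_) hIbot
      have h : q.2 ∈ I.map (LinearMap.snd F A A) := ⟨q, hq, rfl⟩
      rwa [hP, Submodule.mem_bot] at h
    · intro b
      obtain ⟨⟨a, _⟩, hq, rfl⟩ : b ∈ I.map (LinearMap.snd F A A) := hP ▸ Submodule.mem_top
      exact ⟨a, hq⟩
  have hinf : I ⊓ Submodule.fst F A A = ⊥ :=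
    (Submodule.eq_bot_iff _).2 fun q hq => hdisj q hq.1 hq.2
  refine ⟨hinf, ⟨(disjoint_iff.2 hinf).symm, codisjoint_iff.2 (eq_top_iff.2 ?_)⟩, ⟨?_⟩⟩
  · rintro ⟨a, b⟩ -
    obtain ⟨c, hc⟩ := hsurj b
    have hac : (a - c, (0 : A)) ∈ Submodule.fst F A A := by simp [Submodule.fst]
    simpa using Submodule.add_mem_sup hac hc
  · refine LinearEquiv.ofBijective ((LinearMap.snd F A A).domRestrict I) ⟨?_, fun b => ?_⟩
    · rw [injective_iff_map_eq_zero]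
      exact fun q hq => Subtype.ext (hdisj q q.2 hq)
    · obtain ⟨a, ha⟩ := hsurj b
      exact ⟨⟨(a, b), ha⟩, rfl⟩
end

section
/- Let g be a Lie algebra over a field F of characteristic different from 2 and let R : g → g be a linear map. Define [x,y]_R = [R(x),y] + [x,R(y)] and θ_R(x,y) = [R(x),R(y)] − R([R(x),y] + [x,R(y)]). Then the bracket [·,·]_R satisfies the Jacobi identity (equivalently, (g,[·,·]_R) is a Lie algebra, since [·,·]_R is automatically bilinear and alternating) if and only if [θ_R(x,y),z] + [θ_R(y,z),x] + [θ_R(z,x),y] = 0 for all x,y,z ∈ g. -/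
/-- The Jacobiator of `[x, y]_R = [R x, y] + [x, R y]` is the negative of the cyclic sum of
`[θ_R(x, y), z]`. -/
theorem jacobiator_eq_neg_cyclic_sum {L : Type*} [LieRing L] (R : L → L) (x y z : L) :
    (⁅R (⁅R x, y⁆ + ⁅x, R y⁆), z⁆ + ⁅⁅R x, y⁆ + ⁅x, R y⁆, R z⁆) +
      (⁅R (⁅R y, z⁆ + ⁅y, R z⁆), x⁆ + ⁅⁅R y, z⁆ + ⁅y, R z⁆, R x⁆) +
      (⁅R (⁅R z, x⁆ + ⁅z, R x⁆), y⁆ + ⁅⁅R z, x⁆ + ⁅z, R x⁆, R y⁆) =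
    -(⁅⁅R x, R y⁆ - R (⁅R x, y⁆ + ⁅x, R y⁆), z⁆ +
      ⁅⁅R y, R z⁆ - R (⁅R y, z⁆ + ⁅y, R z⁆), x⁆ +
      ⁅⁅R z, R x⁆ - R (⁅R z, x⁆ + ⁅z, R x⁆), y⁆) := by
  simp only [add_lie, sub_lie]
  have hz := lie_jacobi_left (R x) (R y) z
  have hx := lie_jacobi_left (R y) (R z) x
  have hy := lie_jacobi_left (R z) (R x) y
  linear_combination (norm := abel) hz + hx + hy

/-- Semenov-Tyan-Shanskii: for a linear map `R` on a Lie algebra `g`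
over a field of characteristic ≠ 2, the bracket `[x,y]_R = [R x, y] + [x, R y]`
satisfies the Jacobi identity iff
`[θ_R(x,y),z] + [θ_R(y,z),x] + [θ_R(z,x),y] = 0` for all `x,y,z`, where
`θ_R(x,y) = [R x, R y] − R([R x, y] + [x, R y])`. -/
theorem statement10 {F L : Type*} [Field F] [LieRing L] [LieAlgebra F L]
    (h2 : (2 : F) ≠ 0) (R : L →ₗ[F] L) :
    let bR : L → L → L := fun x y => ⁅R x, y⁆ + ⁅x, R y⁆
    let θ : L → L → L := fun x y => ⁅R x, R y⁆ - R (⁅R x, y⁆ + ⁅x, R y⁆)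
    (∀ x y z : L, bR (bR x y) z + bR (bR y z) x + bR (bR z x) y = 0) ↔
    (∀ x y z : L, ⁅θ x y, z⁆ + ⁅θ y z, x⁆ + ⁅θ z x, y⁆ = 0) := by
  intro bR θ
  refine forall₃_congr fun x y z => ?_
  rw [← neg_eq_zero (a := ⁅θ x y, z⁆ + ⁅θ y z, x⁆ + ⁅θ z x, y⁆)]
  exact Eq.congr_left (jacobiator_eq_neg_cyclic_sum R x y z)
end

section
/- Let (g,ω) be a quadratic Lie algebra over a field F of characteristic different from 2, let μ ∈ Cent(g), and let μ* : g → g be a linear map adjoint to μ with respect to ω, i.e. ω(μ(x),y) = ω(x,μ*(y)) for all x,y ∈ g. Then μ*([x,y]) = μ([x,y]) for all x,y ∈ g. In particular, if g is perfect (i.e. [g,g] = g), then μ* = μ. -/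
/-- on a quadratic Lie algebra `(g, ω)` over a field of characteristic
≠ 2, if `μ` is a centrum map and `μ*` its adjoint with respect to `ω`, then
`μ*([x,y]) = μ([x,y])` for all `x,y`; in particular, if `g` is perfect then `μ* = μ`. -/
theorem statement11 {F L : Type*} [Field F] [LieRing L] [LieAlgebra F L]
    (h2 : (2 : F) ≠ 0)
    (ω : L →ₗ[F] L →ₗ[F] F)
    (hsymm : ∀ x y : L, ω x y = ω y x)
    (hnondeg : ∀ x : L, (∀ y : L, ω x y = 0) → x = 0)
    (hinv : ∀ a b c : L, ω ⁅a, b⁆ c = ω a ⁅b, c⁆)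
    (μ μs : L →ₗ[F] L)
    (hcent : ∀ x y : L, μ ⁅x, y⁆ = ⁅μ x, y⁆ ∧ μ ⁅x, y⁆ = ⁅x, μ y⁆)
    (hadj : ∀ x y : L, ω (μ x) y = ω x (μs y)) :
    (∀ x y : L, μs ⁅x, y⁆ = μ ⁅x, y⁆) ∧
    ((Submodule.span F {w : L | ∃ x y : L, w = ⁅x, y⁆} = ⊤) → μs = μ) := by
  have hbracket : ∀ x y : L, μs ⁅x, y⁆ = μ ⁅x, y⁆ := by
    intro x y
    refine sub_eq_zero.mp (hnondeg _ fun z => ?_)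
    rw [hsymm, map_sub, sub_eq_zero]
    calc ω z (μs ⁅x, y⁆) = ω ⁅μ z, x⁆ y := by rw [← hadj, hinv]
      _ = ω ⁅z, μ x⁆ y := by rw [← (hcent z x).1, (hcent z x).2]
      _ = ω z (μ ⁅x, y⁆) := by rw [hinv, (hcent x y).1]
  refine ⟨hbracket, fun hperf => LinearMap.ext_on hperf ?_⟩
  rintro _ ⟨x, y, rfl⟩
  exact hbracket x y
end

section
/- Let g be a Lie algebra over a field F of characteristic different from 2 with trivial center Z(g) = 0, let ω be a nondegenerate symmetric invariant bilinear form on g, and let θ : g × g → g be a bilinear map satisfying, for all x,y,z ∈ g: (i) θ(x,y) = −θ(y,x); (ii) ω(θ(x,y),z) = ω(x,θ(y,z)); (iii) [θ(x,y),z] = θ([x,z],y) + θ(x,[y,z]). Then there exists a linear map ν : [g,g] → g defined on the derived subalgebra [g,g] such that θ(x,y) = ν([x,y]) for all x,y ∈ g, and moreover ν([[x,y],z]) = [ν([x,y]),z] for all x,y,z ∈ g. -/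
open scoped TensorProduct

/-- A function of four variables with the antisymmetries and the Bianchi identity of a curvature
tensor is symmetric under exchange of the two pairs. -/
theorem pair_symm_of_bianchi {F X : Type*} [Field F] (h2 : (2 : F) ≠ 0) (S : X → X → X → X → F)
    (hleft : ∀ x y z w, S x y z w = -S y x z w) (hright : ∀ x y z w, S x y z w = -S x y w z)
    (hcyc : ∀ x y z w, S x y z w + S y z x w + S z x y w = 0) (x y z w : X) :
    S x y z w = S z w x y := by
  apply mul_left_cancel₀ h2
  grind

/-- An invariant skew-symmetric product, associative with respect to an invariant form, commutes
with the bracket. -/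
theorem bracket_skew_product_eq {F L : Type*} [Field F] [LieRing L] [LieAlgebra F L]
    (h2 : (2 : F) ≠ 0) (ω : L →ₗ[F] L →ₗ[F] F) (hsymm : ∀ x y : L, ω x y = ω y x)
    (hnondeg : ∀ x : L, (∀ y : L, ω x y = 0) → x = 0)
    (hinv : ∀ a b c : L, ω ⁅a, b⁆ c = ω a ⁅b, c⁆)
    (θ : L →ₗ[F] L →ₗ[F] L)
    (hskew : ∀ x y : L, θ x y = -θ y x)
    (hassoc : ∀ x y z : L, ω (θ x y) z = ω x (θ y z))
    (hleib : ∀ x y z : L, ⁅θ x y, z⁆ = θ ⁅x, z⁆ y + θ x ⁅y, z⁆) (x y z : L) :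
    ⁅θ x y, z⁆ = θ ⁅x, y⁆ z := by
  have hrot (a b c : L) : ω (θ a b) c = ω (θ b c) a := by rw [hassoc, hsymm]
  have hneg (a b c : L) : ω (θ a b) c = -ω (θ b a) c := by
    rw [hskew, map_neg, LinearMap.neg_apply]
  have hpair (w : L) : ω (θ x y) ⁅z, w⁆ = ω (θ z w) ⁅x, y⁆ := by
    refine pair_symm_of_bianchi h2 (fun a b c d => ω (θ a b) ⁅c, d⁆)
      (fun a b c d => hneg a b _) (fun a b c d => ?_) (fun a b c d => ?_) x y z w
    · rw [← lie_skew, map_neg]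
    · have h := congrArg (fun v => ω v c) (hleib a b d)
      simp only [map_add, LinearMap.add_apply, hinv] at h
      have e : ω (θ a b) ⁅d, c⁆ = -ω (θ a b) ⁅c, d⁆ := by rw [← lie_skew, map_neg]
      have e1 := hrot ⁅a, d⁆ b c
      have e2 := hrot a ⁅b, d⁆ c
      have e3 := hrot ⁅b, d⁆ c a
      linear_combination -h + e - e1 - e2 - e3
  rw [← sub_eq_zero]
  refine hnondeg _ fun w => ?_
  rw [map_sub, LinearMap.sub_apply, hinv, hpair, hrot ⁅x, y⁆, sub_self]

/-- A linear map whose kernel contains that of `b` factors linearly through `b` on every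
subspace of the range of `b`. -/
theorem exists_linearMap_of_ker_le {F V W U : Type*} [Field F] [AddCommGroup V] [Module F V]
    [AddCommGroup W] [Module F W] [AddCommGroup U] [Module F U] (b : V →ₗ[F] W) (t : V →ₗ[F] U)
    (hker : LinearMap.ker b ≤ LinearMap.ker t) (p : Submodule F W) (hp : p ≤ LinearMap.range b) :
    ∃ ν : p →ₗ[F] U, ∀ (v : V) (hv : b v ∈ p), ν ⟨b v, hv⟩ = t v := by
  obtain ⟨g, hg⟩ := b.rangeRestrict.exists_rightInverse_of_surjective b.range_rangeRestrict
  refine ⟨t ∘ₗ g ∘ₗ Submodule.inclusion hp, fun v hv => ?_⟩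
  have h : b (g ⟨b v, hp hv⟩) = b v := congrArg Subtype.val (LinearMap.congr_fun hg ⟨b v, hp hv⟩)
  have hmem : g ⟨b v, hp hv⟩ - v ∈ LinearMap.ker b := by
    rw [LinearMap.mem_ker, map_sub, h, sub_self]
  have := hker hmem
  rwa [LinearMap.mem_ker, map_sub, sub_eq_zero] at this

/-- let `g` be a Lie algebra over a field of characteristic ≠ 2 with
trivial center, `ω` a nondegenerate symmetric invariant bilinear form, and
`θ : g × g → g` bilinear with `θ(x,y) = −θ(y,x)`, `ω(θ(x,y),z) = ω(x,θ(y,z))` and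
`[θ(x,y),z] = θ([x,z],y) + θ(x,[y,z])`. Then there exists a linear map
`ν : [g,g] → g` with `θ(x,y) = ν([x,y])` and `ν([[x,y],z]) = [ν([x,y]),z]`. -/
theorem statement12 {F L : Type*} [Field F] [LieRing L] [LieAlgebra F L]
    (h2 : (2 : F) ≠ 0)
    (hZ : ∀ x : L, (∀ y : L, ⁅x, y⁆ = 0) → x = 0)
    (ω : L →ₗ[F] L →ₗ[F] F)
    (hsymm : ∀ x y : L, ω x y = ω y x)
    (hnondeg : ∀ x : L, (∀ y : L, ω x y = 0) → x = 0)
    (hinv : ∀ a b c : L, ω ⁅a, b⁆ c = ω a ⁅b, c⁆)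
    (θ : L →ₗ[F] L →ₗ[F] L)
    (hskew : ∀ x y : L, θ x y = -θ y x)
    (hassoc : ∀ x y z : L, ω (θ x y) z = ω x (θ y z))
    (hleib : ∀ x y z : L, ⁅θ x y, z⁆ = θ ⁅x, z⁆ y + θ x ⁅y, z⁆) :
    ∃ ν : ↥(Submodule.span F {w : L | ∃ x y : L, w = ⁅x, y⁆}) →ₗ[F] L,
      (∀ x y : L, θ x y = ν ⟨⁅x, y⁆, Submodule.subset_span ⟨x, y, rfl⟩⟩) ∧
      (∀ x y z : L,
        ν ⟨⁅⁅x, y⁆, z⁆, Submodule.subset_span ⟨⁅x, y⁆, z, rfl⟩⟩ =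
          ⁅ν ⟨⁅x, y⁆, Submodule.subset_span ⟨x, y, rfl⟩⟩, z⁆) := by
  have hkey := bracket_skew_product_eq h2 ω hsymm hnondeg hinv θ hskew hassoc hleib
  let b : L ⊗[F] L →ₗ[F] L := TensorProduct.lift (LieModule.toEnd F L L : L →ₗ[F] Module.End F L)
  let t : L ⊗[F] L →ₗ[F] L := TensorProduct.lift θ
  have hbt (u : L ⊗[F] L) (z : L) : ⁅t u, z⁆ = θ (b u) z := by
    induction u with
    | zero => simp
    | tmul x y => simpa [b, t] using hkey x y z
    | add u v hu hv => simp [hu, hv]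
  have hker : LinearMap.ker b ≤ LinearMap.ker t := fun u hu =>
    hZ _ fun z => by rw [hbt, LinearMap.mem_ker.mp hu, map_zero, LinearMap.zero_apply]
  obtain ⟨ν, hν⟩ := exists_linearMap_of_ker_le b t hker
    (Submodule.span F {w : L | ∃ x y : L, w = ⁅x, y⁆})
    (Submodule.span_le.mpr fun _ ⟨x, y, hw⟩ => ⟨x ⊗ₜ y, by simp [b, hw]⟩)
  have hθ (x y : L) : θ x y = ν ⟨⁅x, y⁆, Submodule.subset_span ⟨x, y, rfl⟩⟩ :=
    (hν (x ⊗ₜ y) (Submodule.subset_span ⟨x, y, rfl⟩)).symm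
  exact ⟨ν, hθ, fun x y z => by rw [← hθ, ← hθ, hkey]⟩
end

section
/- Let g be a perfect finite-dimensional Lie algebra over a field F of characteristic different from 2 with trivial center Z(g) = 0, let ω be a nondegenerate symmetric invariant bilinear form on g, and let θ : g × g → g be a bilinear map satisfying, for all x,y,z ∈ g: (i) θ(x,y) = −θ(y,x); (ii) ω(θ(x,y),z) = ω(x,θ(y,z)); (iii) [θ(x,y),z] = θ([x,z],y) + θ(x,[y,z]). Then there exists a centrum map ν ∈ Cent(g) such that θ(x,y) = ν([x,y]) = [ν(x),y] = [x,ν(y)] for all x,y ∈ g. -/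
/-- A skew, `ω`-associative derivation-equivariant product `θ` on a Lie algebra with a nondegenerate
invariant form satisfies `⁅θ z w, x⁆ = θ ⁅z, w⁆ x`. -/
theorem lie_apply_eq_apply_lie {F L : Type*} [Field F] [LieRing L] [LieAlgebra F L]
    (h2 : (2 : F) ≠ 0)
    (ω : L →ₗ[F] L →ₗ[F] F)
    (hsymm : ∀ x y : L, ω x y = ω y x)
    (hnondeg : ∀ x : L, (∀ y : L, ω x y = 0) → x = 0)
    (hinv : ∀ a b c : L, ω ⁅a, b⁆ c = ω a ⁅b, c⁆)
    (θ : L →ₗ[F] L →ₗ[F] L)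
    (hskew : ∀ x y : L, θ x y = -θ y x)
    (hassoc : ∀ x y z : L, ω (θ x y) z = ω x (θ y z))
    (hleib : ∀ x y z : L, ⁅θ x y, z⁆ = θ ⁅x, z⁆ y + θ x ⁅y, z⁆) (z w x : L) :
    ⁅θ z w, x⁆ = θ ⁅z, w⁆ x := by
  have cyc (a b c : L) : ω (θ a b) c = ω (θ b c) a := by rw [hassoc, hsymm]
  have skew (a b c : L) : ω (θ a b) c = -ω (θ a c) b := by
    rw [cyc a b c, cyc a c b, hskew b c, map_neg, LinearMap.neg_apply]
  have brack (a b c d : L) : ω (θ ⁅a, b⁆ c) d = -ω (θ ⁅b, a⁆ c) d := by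
    rw [← lie_skew, map_neg, LinearMap.neg_apply, map_neg, LinearMap.neg_apply]
  have inv (a b c d : L) :
      ω (θ ⁅a, d⁆ b) c + ω (θ ⁅b, d⁆ c) a + ω (θ ⁅c, d⁆ a) b = 0 := by
    have h := hinv (θ a b) d c
    rw [hleib, map_add, LinearMap.add_apply, cyc a ⁅b, d⁆ c, ← cyc ⁅d, c⁆ a b, brack d c] at h
    linear_combination h
  refine sub_eq_zero.mp (hnondeg _ fun y => ?_)
  rw [map_sub, LinearMap.sub_apply, hinv, ← cyc ⁅x, y⁆ z w]
  refine (mul_eq_zero.mp ?_).resolve_left h2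
  have hx := inv y z w x
  have hy := inv x z w y
  have hz := inv x y w z
  rw [brack y x, skew _ w y, brack w x] at hx
  rw [brack z y, skew _ w x, brack w y, skew _ x z] at hy
  rw [brack x z, skew _ w x, brack w z] at hz
  linear_combination hy - hx + hz - inv x y z w

/-- Corollary 4: let `g` be a perfect finite-dimensional Lie algebra
over a field of characteristic ≠ 2 with trivial center, `ω` a nondegenerate
symmetric invariant bilinear form, and `θ` bilinear satisfying (i)–(iii). Then there
is a centrum map `ν ∈ Cent(g)` with `θ(x,y) = ν([x,y]) = [ν(x),y] = [x,ν(y)]`. -/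
theorem statement13 {F L : Type*} [Field F] [LieRing L] [LieAlgebra F L]
    [FiniteDimensional F L]
    (h2 : (2 : F) ≠ 0)
    (hperf : Submodule.span F {w : L | ∃ x y : L, w = ⁅x, y⁆} = ⊤)
    (hZ : ∀ x : L, (∀ y : L, ⁅x, y⁆ = 0) → x = 0)
    (ω : L →ₗ[F] L →ₗ[F] F)
    (hsymm : ∀ x y : L, ω x y = ω y x)
    (hnondeg : ∀ x : L, (∀ y : L, ω x y = 0) → x = 0)
    (hinv : ∀ a b c : L, ω ⁅a, b⁆ c = ω a ⁅b, c⁆)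
    (θ : L →ₗ[F] L →ₗ[F] L)
    (hskew : ∀ x y : L, θ x y = -θ y x)
    (hassoc : ∀ x y z : L, ω (θ x y) z = ω x (θ y z))
    (hleib : ∀ x y z : L, ⁅θ x y, z⁆ = θ ⁅x, z⁆ y + θ x ⁅y, z⁆) :
    ∃ ν : L →ₗ[F] L, ∀ x y : L,
      θ x y = ν ⁅x, y⁆ ∧ ν ⁅x, y⁆ = ⁅ν x, y⁆ ∧ ν ⁅x, y⁆ = ⁅x, ν y⁆ := by
  have key := lie_apply_eq_apply_lie h2 ω hsymm hnondeg hinv θ hskew hassoc hleib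
  have uniq (a b : L) (h : ∀ y : L, ⁅a, y⁆ = ⁅b, y⁆) : a = b :=
    sub_eq_zero.mp (hZ _ fun y => by rw [sub_lie, h, sub_self])
  have inner (u : L) : ∃ v : L, ∀ y : L, ⁅v, y⁆ = θ u y := by
    have hu : u ∈ Submodule.span F {w : L | ∃ x y : L, w = ⁅x, y⁆} := hperf ▸ Submodule.mem_top
    induction hu using Submodule.span_induction with
    | mem u hu =>
      obtain ⟨z, w, rfl⟩ := hu
      exact ⟨θ z w, key z w⟩
    | zero => exact ⟨0, by simp⟩
    | add a b _ _ ha hb =>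
      obtain ⟨v, hv⟩ := ha
      obtain ⟨v', hv'⟩ := hb
      exact ⟨v + v', fun y => by simp [hv, hv']⟩
    | smul c a _ ha =>
      obtain ⟨v, hv⟩ := ha
      exact ⟨c • v, fun y => by simp [hv]⟩
  choose ν hν using inner
  have hνlie (x y : L) : ν ⁅x, y⁆ = θ x y := uniq _ _ fun z => by rw [hν, key]
  refine ⟨⟨⟨ν, fun a b => uniq _ _ fun y => by simp [hν]⟩,
    fun c a => uniq _ _ fun y => by simp [hν]⟩, fun x y => ⟨(hνlie x y).symm, ?_, ?_⟩⟩
  · exact (hνlie x y).trans (hν x y).symm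
  · refine (hνlie x y).trans ?_
    change _ = ⁅x, ν y⁆
    rw [← lie_skew, hν, hskew]
end

section
/- Let (g,ω) be a quadratic Lie algebra over a field F of characteristic different from 2, let R : g → g be a linear map skew-adjoint with respect to ω, and define θ(x,y) = [R(x),R(y)] − R([R(x),y] + [x,R(y)]). Then the following two conditions are equivalent: (a) [θ(x,y),z] + [θ(y,z),x] + [θ(z,x),y] = 0 for all x,y,z ∈ g; (b) [θ(x,y),z] = θ([x,z],y) + θ(x,[y,z]) for all x,y,z ∈ g. (By the paper's Propositions 2 and 3, condition (a) is precisely the condition for the pair (g,δ_r), with r the skew-symmetric tensor corresponding to R via ω, to be a Lie bialgebra.) -/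
/-- The trilinear form `ω(θ(x,y),z)` attached to a skew-adjoint `R` is invariant under cyclic
permutations. -/
lemma form_theta_cyclic {F L : Type*} [Field F] [LieRing L] [LieAlgebra F L]
    (ω : L →ₗ[F] L →ₗ[F] F)
    (hsymm : ∀ x y : L, ω x y = ω y x)
    (hinv : ∀ a b c : L, ω ⁅a, b⁆ c = ω a ⁅b, c⁆)
    (R : L →ₗ[F] L)
    (hskewadj : ∀ x y : L, ω (R x) y = -ω x (R y)) (x y z : L) :
    ω (⁅R x, R y⁆ - R (⁅R x, y⁆ + ⁅x, R y⁆)) z =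
      ω (⁅R y, R z⁆ - R (⁅R y, z⁆ + ⁅y, R z⁆)) x := by
  have hcyc (a b c : L) : ω ⁅a, b⁆ c = ω ⁅b, c⁆ a := by rw [hinv, hsymm]
  simp only [map_sub, map_add, LinearMap.sub_apply, LinearMap.add_apply, hskewadj]
  rw [hcyc (R x) (R y) z, hcyc (R x) y (R z), hcyc x (R y) (R z)]
  ring

/-- Proposition 5: on a quadratic Lie algebra `(g,ω)` over a field of
characteristic ≠ 2, with `R` skew-adjoint with respect to `ω` and
`θ(x,y) = [R x, R y] − R([R x, y] + [x, R y])`, the cyclic condition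
`[θ(x,y),z] + [θ(y,z),x] + [θ(z,x),y] = 0` holds for all `x,y,z` iff
`[θ(x,y),z] = θ([x,z],y) + θ(x,[y,z])` holds for all `x,y,z`. -/
theorem statement15 {F L : Type*} [Field F] [LieRing L] [LieAlgebra F L]
    (h2 : (2 : F) ≠ 0)
    (ω : L →ₗ[F] L →ₗ[F] F)
    (hsymm : ∀ x y : L, ω x y = ω y x)
    (hnondeg : ∀ x : L, (∀ y : L, ω x y = 0) → x = 0)
    (hinv : ∀ a b c : L, ω ⁅a, b⁆ c = ω a ⁅b, c⁆)
    (R : L →ₗ[F] L)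
    (hskewadj : ∀ x y : L, ω (R x) y = -ω x (R y)) :
    let θ : L → L → L := fun x y => ⁅R x, R y⁆ - R (⁅R x, y⁆ + ⁅x, R y⁆)
    (∀ x y z : L, ⁅θ x y, z⁆ + ⁅θ y z, x⁆ + ⁅θ z x, y⁆ = 0) ↔
    (∀ x y z : L, ⁅θ x y, z⁆ = θ ⁅x, z⁆ y + θ x ⁅y, z⁆) := by
  intro θ
  have hcyc (x y z : L) : ω (θ x y) z = ω (θ y z) x :=
    form_theta_cyclic ω hsymm hinv R hskewadj x y z
  have key (x y z w : L) :
      ω (⁅θ x y, z⁆ - (θ ⁅x, z⁆ y + θ x ⁅y, z⁆)) w =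
        -ω (⁅θ x y, w⁆ + ⁅θ y w, x⁆ + ⁅θ w x, y⁆) z := by
    simp only [map_sub, map_add, LinearMap.sub_apply, LinearMap.add_apply, hinv]
    rw [hcyc ⁅x, z⁆ y w, hcyc x ⁅y, z⁆ w, hcyc ⁅y, z⁆ w x, ← lie_skew z w, map_neg]
    ring
  constructor
  · intro h x y z
    refine sub_eq_zero.mp (hnondeg _ fun w => ?_)
    rw [key, h, map_zero, LinearMap.zero_apply, neg_zero]
  · intro h x y z
    refine hnondeg _ fun w => ?_
    rw [← neg_eq_zero, ← key, h, sub_self, map_zero, LinearMap.zero_apply]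
end

section
/- Let (g,ω) be a quadratic Lie algebra over a field F of characteristic different from 2, let R : g → g be a linear map skew-adjoint with respect to ω, and let μ ∈ Cent(g) be self-adjoint with respect to ω (i.e. ω(μ(x),y) = ω(x,μ(y)) for all x,y). Suppose that [R(x),R(y)] − R([R(x),y] + [x,R(y)]) = −μ(μ([x,y])) for all x,y ∈ g. Then the linear map B = (1/2)(R − μ) is a Rota–Baxter operator of weight μ on g, and B satisfies ω(B(x),y) + ω(x,B(y)) + ω(μ(x),y) = 0 for all x,y ∈ g (i.e. B + B* + μ = 0). -/
/-- on a quadratic Lie algebra `(g,ω)` over a field of characteristic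
≠ 2, let `R` be skew-adjoint, `μ ∈ Cent(g)` self-adjoint, and suppose
`[R x, R y] − R([R x, y] + [x, R y]) = −μ²([x,y])` for all `x,y`. Then
`B = ½(R − μ)` is a Rota–Baxter operator of weight `μ` and satisfies
`B + B* + μ = 0`, i.e. `ω(B x, y) + ω(x, B y) + ω(μ x, y) = 0`. -/
theorem statement17 {F L : Type*} [Field F] [LieRing L] [LieAlgebra F L]
    (h2 : (2 : F) ≠ 0)
    (ω : L →ₗ[F] L →ₗ[F] F)
    (hsymm : ∀ x y : L, ω x y = ω y x)
    (hnondeg : ∀ x : L, (∀ y : L, ω x y = 0) → x = 0)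
    (hinv : ∀ a b c : L, ω ⁅a, b⁆ c = ω a ⁅b, c⁆)
    (R μ : L →ₗ[F] L)
    (hskewadj : ∀ x y : L, ω (R x) y = -ω x (R y))
    (hcent : ∀ x y : L, μ ⁅x, y⁆ = ⁅μ x, y⁆ ∧ μ ⁅x, y⁆ = ⁅x, μ y⁆)
    (hselfadj : ∀ x y : L, ω (μ x) y = ω x (μ y))
    (hmcybe : ∀ x y : L,
      ⁅R x, R y⁆ - R (⁅R x, y⁆ + ⁅x, R y⁆) = -μ (μ ⁅x, y⁆)) :
    let B : L →ₗ[F] L := (2 : F)⁻¹ • (R - μ)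
    (∀ x y : L, ⁅B x, B y⁆ = B (⁅B x, y⁆ + ⁅x, B y⁆ + μ ⁅x, y⁆)) ∧
    (∀ x y : L, ω (B x) y + ω x (B y) + ω (μ x) y = 0) := by
  intro B
  have hB : ∀ x, B x = (2 : F)⁻¹ • (R x - μ x) := fun _ => rfl
  refine ⟨fun x y => ?_, fun x y => ?_⟩
  · have hinner : ⁅B x, y⁆ + ⁅x, B y⁆ + μ ⁅x, y⁆ = (2 : F)⁻¹ • (⁅R x, y⁆ + ⁅x, R y⁆) := by
      rw [hB, hB, smul_lie, lie_smul, sub_lie, lie_sub, ← (hcent x y).1, ← (hcent x y).2]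
      match_scalars <;> field_simp <;> ring
    have hμμ : ⁅μ x, μ y⁆ = μ (μ ⁅x, y⁆) := by
      rw [(hcent x y).2, (hcent x (μ y)).1]
    have hRR : ⁅R x, R y⁆ = R (⁅R x, y⁆ + ⁅x, R y⁆) - μ (μ ⁅x, y⁆) := by
      rw [sub_eq_iff_eq_add.mp (hmcybe x y)]
      abel
    rw [hinner, map_smul, hB, hB, hB, smul_lie, lie_smul, sub_lie, lie_sub, lie_sub, hμμ, hRR,
      ← (hcent x (R y)).1, ← (hcent (R x) y).2, map_add μ]
    congr 2
    abel
  · simp only [hB, map_smul, map_sub, LinearMap.smul_apply, LinearMap.sub_apply, smul_eq_mul,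
      hskewadj, hselfadj]
    field_simp
    ring
end

section
/- Let g be a Lie algebra over a field F of characteristic different from 2, let μ, η ∈ Cent(g) be centrum maps with η([x,y]) = −2μ([x,y]) for all x,y ∈ g, and let R : g → g be a linear map such that R + μ is a Rota–Baxter operator of weight η. Then [R(x),R(y)] − R([R(x),y] + [x,R(y)]) = −μ(μ([x,y])) for all x,y ∈ g. -/
/-- let `g` be a Lie algebra over a field of characteristic ≠ 2,
`μ, η ∈ Cent(g)` with `η([x,y]) = −2μ([x,y])`, and let `R` be a linear map such that
`R + μ` is a Rota–Baxter operator of weight `η`. Then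
`[R x, R y] − R([R x, y] + [x, R y]) = −μ²([x,y])` for all `x,y`. -/
theorem statement18 {F L : Type*} [Field F] [LieRing L] [LieAlgebra F L]
    (h2 : (2 : F) ≠ 0)
    (μ η R : L →ₗ[F] L)
    (hμ : ∀ x y : L, μ ⁅x, y⁆ = ⁅μ x, y⁆ ∧ μ ⁅x, y⁆ = ⁅x, μ y⁆)
    (hη : ∀ x y : L, η ⁅x, y⁆ = ⁅η x, y⁆ ∧ η ⁅x, y⁆ = ⁅x, η y⁆)
    (hημ : ∀ x y : L, η ⁅x, y⁆ = -(2 : F) • μ ⁅x, y⁆)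
    (hRB : ∀ x y : L,
      ⁅(R + μ) x, (R + μ) y⁆ =
        (R + μ) (⁅(R + μ) x, y⁆ + ⁅x, (R + μ) y⁆ + η ⁅x, y⁆)) :
    ∀ x y : L, ⁅R x, R y⁆ - R (⁅R x, y⁆ + ⁅x, R y⁆) = -μ (μ ⁅x, y⁆) := by
  intro x y
  have harg : ⁅(R + μ) x, y⁆ + ⁅x, (R + μ) y⁆ + η ⁅x, y⁆ = ⁅R x, y⁆ + ⁅x, R y⁆ := by
    rw [hημ, LinearMap.add_apply, LinearMap.add_apply, add_lie, lie_add, ← (hμ x y).1,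
      ← (hμ x y).2]
    module
  have hμμ : ⁅μ x, μ y⁆ = μ (μ ⁅x, y⁆) := by
    rw [← (hμ x (μ y)).1, ← (hμ x y).2]
  have h := hRB x y
  rw [harg, LinearMap.add_apply, LinearMap.add_apply, LinearMap.add_apply, add_lie, lie_add,
    lie_add, map_add μ, hμμ, ← (hμ (R x) y).2, ← (hμ x (R y)).1] at h
  rw [← sub_eq_zero] at h ⊢
  rw [← h]
  abel
end

section
/- Let g be a finite-dimensional simple Lie algebra over the real numbers ℝ, and suppose that g is not absolutely simple, i.e. there exists a centrum map of g that is not a real scalar multiple of the identity. Then every centrum map ν ∈ Cent(g) has a square root in Cent(g): there exists μ ∈ Cent(g) such that μ∘μ = ν. (This is the key step in the paper's Proposition 7 (originally due to Chloup), showing via Theorem 3 that every Lie bialgebra structure on such g is either triangular or factorizable; it rests on the fact that Cent(g) is a field, being a finite field extension of ℝ, hence isomorphic to ℂ.) -/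
namespace LieAlgebra

lemma exists_lie_ne_zero_of_isSimple (R L : Type*) [CommRing R] [LieRing L] [LieAlgebra R L]
    [IsSimple R L] : ∃ x y : L, ⁅x, y⁆ ≠ 0 := by
  by_contra! h
  exact IsSimple.non_abelian R (L := L) ⟨h⟩

variable (K L : Type*) [Field K] [LieRing L] [LieAlgebra K L]

/-- The centroid of a Lie algebra: the linear endomorphisms commuting with the adjoint action. -/
def centroid : Subalgebra K (Module.End K L) :=
  Subalgebra.centralizer K (Set.range (LieAlgebra.ad K L))

variable {K L}

lemma mem_centroid_iff {f : Module.End K L} :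
    f ∈ centroid K L ↔ ∀ x y : L, f ⁅x, y⁆ = ⁅x, f y⁆ := by
  simp only [centroid, Subalgebra.mem_centralizer_iff, Set.forall_mem_range]
  refine forall_congr' fun x ↦ ⟨fun h y ↦ ?_, fun h ↦ LinearMap.ext fun y ↦ ?_⟩
  · simpa using (LinearMap.congr_fun h y).symm
  · simpa using (h y).symm

lemma apply_lie_of_mem_centroid {f : Module.End K L} (hf : f ∈ centroid K L) (x y : L) :
    f ⁅x, y⁆ = ⁅f x, y⁆ := by
  rw [← lie_skew, map_neg, mem_centroid_iff.1 hf, lie_skew]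

lemma mem_centroid_iff_forall_and {f : Module.End K L} :
    f ∈ centroid K L ↔ ∀ x y : L, f ⁅x, y⁆ = ⁅f x, y⁆ ∧ f ⁅x, y⁆ = ⁅x, f y⁆ :=
  ⟨fun hf x y ↦ ⟨apply_lie_of_mem_centroid hf x y, mem_centroid_iff.1 hf x y⟩,
    fun hf ↦ mem_centroid_iff.2 fun x y ↦ (hf x y).2⟩

variable [IsSimple K L]

/-- Schur's lemma for the adjoint representation of a simple Lie algebra. -/
lemma eq_zero_of_mem_centroid_of_apply_eq_zero {f : Module.End K L} (hf : f ∈ centroid K L)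
    {z : L} (hz : z ≠ 0) (hfz : f z = 0) : f = 0 := by
  let I : LieIdeal K L :=
    { LinearMap.ker f with
      lie_mem := fun {x y} (hy : f y = 0) ↦ show f ⁅x, y⁆ = 0 by
        rw [mem_centroid_iff.1 hf, hy, lie_zero] }
  have mem_I (x : L) : x ∈ I ↔ f x = 0 := Iff.rfl
  rcases IsSimple.eq_bot_or_eq_top (R := K) I with h | h
  · exact absurd ((LieSubmodule.mem_bot z).1 (h ▸ (mem_I z).2 hfz)) hz
  · exact LinearMap.ext fun x ↦ (mem_I x).1 (h ▸ LieSubmodule.mem_top x)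

lemma mul_comm_of_mem_centroid {f g : Module.End K L} (hf : f ∈ centroid K L)
    (hg : g ∈ centroid K L) : f * g = g * f := by
  obtain ⟨x, y, hxy⟩ := exists_lie_ne_zero_of_isSimple K L
  refine sub_eq_zero.1 (eq_zero_of_mem_centroid_of_apply_eq_zero
    (sub_mem (mul_mem hf hg) (mul_mem hg hf)) hxy ?_)
  rw [LinearMap.sub_apply, Module.End.mul_apply, Module.End.mul_apply, mem_centroid_iff.1 hg,
    apply_lie_of_mem_centroid hf, apply_lie_of_mem_centroid hf, mem_centroid_iff.1 hg, sub_self]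

instance : CommRing (centroid K L) where
  mul_comm f g := Subtype.ext (mul_comm_of_mem_centroid f.2 g.2)

instance : IsDomain (centroid K L) := by
  obtain ⟨x, y, hxy⟩ := exists_lie_ne_zero_of_isSimple K L
  have : Nontrivial (centroid K L) :=
    ⟨0, 1, fun h ↦ hxy (LinearMap.congr_fun (congrArg Subtype.val h) ⁅x, y⁆).symm⟩
  have : NoZeroDivisors (centroid K L) := by
    refine ⟨fun {f g} hfg ↦ or_iff_not_imp_right.2 fun hg ↦ ?_⟩
    obtain ⟨z, hz⟩ : ∃ z, (g : Module.End K L) z ≠ 0 := by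
      by_contra! h
      exact hg (Subtype.ext (LinearMap.ext h))
    exact Subtype.ext (eq_zero_of_mem_centroid_of_apply_eq_zero f.2 hz
      (LinearMap.congr_fun (congrArg Subtype.val hfg) z))
  exact NoZeroDivisors.to_isDomain _

lemma isField_centroid [FiniteDimensional K L] : IsField (centroid K L) :=
  isField_of_isIntegral_of_isField' (R := K) (Field.toIsField K)

end LieAlgebra

/-- In an algebraic field extension of `ℝ` other than `ℝ` itself, every element is a square. -/
lemma Real.isSquare_of_isAlgebraic_of_notMem_range {F : Type*} [Field F] [Algebra ℝ F]
    [Algebra.IsAlgebraic ℝ F] {b : F} (hb : b ∉ Set.range (algebraMap ℝ F)) (a : F) :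
    IsSquare a := by
  rcases Real.nonempty_algEquiv_or F with ⟨⟨e⟩⟩ | ⟨⟨e⟩⟩
  · refine absurd ⟨e b, ?_⟩ hb
    rw [← e.symm.commutes, Algebra.algebraMap_self_apply, e.symm_apply_apply]
  · obtain ⟨z, hz⟩ := IsAlgClosed.exists_pow_nat_eq (e a) two_pos
    exact ⟨e.symm z, e.injective (by rw [map_mul, e.apply_symm_apply, ← hz, sq])⟩

/-- let `g` be a finite-dimensional simple real Lie algebra that is
not absolutely simple (there is a centrum map that is not a real scalar multiple of
the identity). Then every centrum map `ν ∈ Cent(g)` has a square root in `Cent(g)`. -/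
theorem statement19 {L : Type*} [LieRing L] [LieAlgebra ℝ L]
    [FiniteDimensional ℝ L] [LieAlgebra.IsSimple ℝ L]
    (hns : ∃ μ₀ : L →ₗ[ℝ] L,
      (∀ x y : L, μ₀ ⁅x, y⁆ = ⁅μ₀ x, y⁆ ∧ μ₀ ⁅x, y⁆ = ⁅x, μ₀ y⁆) ∧
      ∀ c : ℝ, μ₀ ≠ c • (LinearMap.id : L →ₗ[ℝ] L)) :
    ∀ ν : L →ₗ[ℝ] L, (∀ x y : L, ν ⁅x, y⁆ = ⁅ν x, y⁆ ∧ ν ⁅x, y⁆ = ⁅x, ν y⁆) →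
      ∃ μ : L →ₗ[ℝ] L,
        (∀ x y : L, μ ⁅x, y⁆ = ⁅μ x, y⁆ ∧ μ ⁅x, y⁆ = ⁅x, μ y⁆) ∧ μ ∘ₗ μ = ν := by
  intro ν hν
  obtain ⟨μ₀, hμ₀, hns⟩ := hns
  let _ : Field (LieAlgebra.centroid ℝ L) := LieAlgebra.isField_centroid.toField
  have hb : (⟨μ₀, LieAlgebra.mem_centroid_iff_forall_and.2 hμ₀⟩ : LieAlgebra.centroid ℝ L) ∉
      Set.range (algebraMap ℝ (LieAlgebra.centroid ℝ L)) := by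
    rintro ⟨c, hc⟩
    exact hns c (congrArg Subtype.val hc).symm
  obtain ⟨μ, hμ⟩ := Real.isSquare_of_isAlgebraic_of_notMem_range hb
    ⟨ν, LieAlgebra.mem_centroid_iff_forall_and.2 hν⟩
  exact ⟨μ, LieAlgebra.mem_centroid_iff_forall_and.1 μ.2, (congrArg Subtype.val hμ).symm⟩
end
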